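/- Let f(z) = z / (1 − z²/2) for z in the open unit disk 𝔻 (so f ∈ 𝒜). Then the function F₂ defined by F₂(z) = (2 ∫₀^z u f'(u) du)^{1/2} = (4 ∫₀^z (2 + u²)/(2 − u²)² du)^{1/2}, with the principal branch of the square root, is analytic and univalent in 𝔻; that is, there is an analytic injective function F on 𝔻 with F(0) = 0, F'(0) = 1 and F(z)² = 2 ∫₀^z u f'(u) du for all z ∈ 𝔻. -/

import Mathlib

open Complex Set

/-!
Substituting `s = u²` turns the radicand `2 ∫₀^z u f'(u) du` into `h (z²)`, where
`h' (s) = 2 (2 + s) / (2 - s)²` and `h 0 = 0`. On the unit disk `h'` has positive real part, so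
each difference quotient of `h` has positive real part as well. Hence `h` is univalent, and the
principal square root of `h s / s` is analytic. So `F z = z (h (z²) / z²)^{1/2}` is the classical
square-root transform of the univalent function `h`, and it is univalent because it is odd.
-/

section NoshiroWarschawski

variable {f f' : ℂ → ℂ} {s : Set ℂ} {a b : ℂ}

theorem exists_re_slope_eq_re_deriv (hs : Convex ℝ s)
    (hf : ∀ z ∈ s, HasDerivWithinAt f (f' z) s z) (ha : a ∈ s) (hb : b ∈ s) (hab : a ≠ b) :
    ∃ c ∈ s, (slope f a b).re = (f' c).re := by
  have hφ : ∀ z ∈ s, HasFDerivWithinAt (fun w ↦ ((b - a)⁻¹ * f w).re)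
      (reCLM ∘L (((b - a)⁻¹ • ContinuousLinearMap.toSpanSingleton ℂ (f' z)).restrictScalars ℝ))
      s z := fun z hz ↦
    reCLM.hasFDerivAt.comp_hasFDerivWithinAt z
      (((hf z hz).hasFDerivWithinAt.const_mul (b - a)⁻¹).restrictScalars ℝ)
  obtain ⟨c, hc, hslope⟩ := domain_mvt hφ hs ha hb
  refine ⟨c, hs.segment_subset ha hb hc, ?_⟩
  have hba : b - a ≠ 0 := sub_ne_zero.2 hab.symm
  simpa [slope, mul_sub, hba] using hslope

theorem injOn_of_re_deriv_pos (hs : Convex ℝ s) (hf : ∀ z ∈ s, HasDerivWithinAt f (f' z) s z)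
    (hpos : ∀ z ∈ s, 0 < (f' z).re) : InjOn f s := by
  intro a ha b hb hfab
  by_contra hab
  obtain ⟨c, hc, hslope⟩ := exists_re_slope_eq_re_deriv hs hf ha hb hab
  have hzero : (f' c).re = 0 := by simpa [slope, hfab] using hslope.symm
  exact (hpos c hc).ne' hzero

theorem re_dslope_pos (hs : Convex ℝ s) (hf : ∀ z ∈ s, HasDerivAt f (f' z) z)
    (hpos : ∀ z ∈ s, 0 < (f' z).re) (ha : a ∈ s) (hb : b ∈ s) : 0 < (dslope f a b).re := by
  obtain rfl | hab := eq_or_ne a b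
  · simpa [(hf a ha).deriv] using hpos a ha
  · obtain ⟨c, hc, hslope⟩ :=
      exists_re_slope_eq_re_deriv hs (fun z hz ↦ (hf z hz).hasDerivWithinAt) ha hb hab
    rw [dslope_of_ne f hab.symm, hslope]
    exact hpos c hc

end NoshiroWarschawski

/-- The square-root transform `z ↦ √(h (z²))` of a function `h` with `h 0 = 0`, used here to
take a square root of the radicand. It is encoded as `z (h (z²) / z²)^{1/2}` with the principal
branch; `dslope h 0` is the quotient `h s / s`, extended to `s = 0` by `deriv h 0`. -/
noncomputable def sqrtTransform (h : ℂ → ℂ) (z : ℂ) : ℂ :=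
  z * dslope h 0 (z ^ 2) ^ (2⁻¹ : ℂ)

section SqrtTransform

variable {h : ℂ → ℂ} {U : Set ℂ}

theorem sqrtTransform_zero (h : ℂ → ℂ) : sqrtTransform h 0 = 0 := by
  simp [sqrtTransform]

theorem sqrtTransform_neg (h : ℂ → ℂ) (z : ℂ) : sqrtTransform h (-z) = -sqrtTransform h z := by
  simp [sqrtTransform]

theorem sqrtTransform_sq (h₀ : h 0 = 0) (z : ℂ) : sqrtTransform h z ^ 2 = h (z ^ 2) := by
  rw [sqrtTransform, mul_pow, cpow_ofNat_inv_pow]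
  simpa [h₀] using sub_smul_dslope h 0 (z ^ 2)

theorem injOn_sqrtTransform (h₀ : h 0 = 0) (hU : 0 ∈ U) (hinj : InjOn h U) :
    InjOn (sqrtTransform h) ((· ^ 2) ⁻¹' U) := by
  intro z hz w hw hzw
  have hsq : z ^ 2 = w ^ 2 :=
    hinj hz hw (by rw [← sqrtTransform_sq h₀, ← sqrtTransform_sq h₀, hzw])
  obtain rfl | rfl := sq_eq_sq_iff_eq_or_eq_neg.1 hsq
  · rfl
  have hw_zero : sqrtTransform h w = 0 := neg_eq_self.1 (sqrtTransform_neg h w ▸ hzw)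
  have hw_sq : w ^ 2 = 0 :=
    hinj hw hU (by rw [← sqrtTransform_sq h₀, hw_zero, h₀, zero_pow two_ne_zero])
  rw [eq_zero_of_pow_eq_zero hw_sq, neg_zero]

theorem differentiableOn_sqrtTransform (hU : IsOpen U) (hU₀ : 0 ∈ U) (hh : DifferentiableOn ℂ h U)
    (hslit : ∀ s ∈ U, dslope h 0 s ∈ slitPlane) :
    DifferentiableOn ℂ (sqrtTransform h) ((· ^ 2) ⁻¹' U) := by
  have hquot : DifferentiableOn ℂ (fun z ↦ dslope h 0 (z ^ 2)) ((· ^ 2) ⁻¹' U) :=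
    ((differentiableOn_dslope (hU.mem_nhds hU₀)).2 hh).comp (by fun_prop) (mapsTo_preimage _ _)
  exact differentiableOn_id.mul (hquot.cpow_const fun z hz ↦ hslit _ hz)

theorem hasDerivAt_sqrtTransform_zero (hh : DifferentiableAt ℂ h 0)
    (hslit : deriv h 0 ∈ slitPlane) :
    HasDerivAt (sqrtTransform h) (deriv h 0 ^ (2⁻¹ : ℂ)) 0 := by
  have hquot : Filter.Tendsto (fun z ↦ dslope h 0 (z ^ 2)) (nhds 0) (nhds (deriv h 0)) := by
    have hsq : Filter.Tendsto (fun z : ℂ ↦ z ^ 2) (nhds 0) (nhds 0) :=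
      Continuous.tendsto' (by fun_prop) _ _ (zero_pow two_ne_zero)
    exact dslope_same h 0 ▸ (continuousAt_dslope_same.2 hh).tendsto.comp hsq
  refine hasDerivAt_iff_tendsto_slope.2 <| Filter.Tendsto.congr' ?_ <|
    (hquot.cpow tendsto_const_nhds hslit).mono_left nhdsWithin_le_nhds
  filter_upwards [self_mem_nhdsWithin] with z (hz : z ≠ 0)
  simp [slope, sqrtTransform, hz]

end SqrtTransform

theorem two_mul_integral_mul_eq_sub_of_hasDerivAt_sq {U : Set ℂ} {f' h : ℂ → ℂ} {z : ℂ}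
    (hU : StarConvex ℝ 0 U) (hf' : ContinuousOn f' U)
    (hh : ∀ u ∈ U, HasDerivAt h (f' u) (u ^ 2)) (hz : z ∈ U) :
    2 * (z * ∫ t in (0 : ℝ)..1, ((t : ℂ) * z) * f' ((t : ℂ) * z)) = h (z ^ 2) - h 0 := by
  have hmem : ∀ t ∈ Icc (0 : ℝ) 1, (t : ℂ) * z ∈ U := fun t ht ↦ by
    simpa using hU.smul_mem hz ht.1 ht.2
  have hcont : ContinuousOn (fun t : ℝ ↦ ((t : ℂ) * z) * f' ((t : ℂ) * z)) (Icc 0 1) :=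
    ContinuousOn.mul (by fun_prop) (hf'.comp (by fun_prop) hmem)
  have hprim : ∀ u ∈ U, HasDerivAt (fun w ↦ h (w ^ 2) / 2) (u * f' u) u := fun u hu ↦
    (((hh u hu).comp u (hasDerivAt_pow 2 u)).div_const 2).congr_deriv <| by
      simp only [Nat.cast_ofNat, Nat.add_one_sub_one, pow_one]
      ring
  have hint := intervalIntegral.integral_unitInterval_deriv_eq_sub
    (f := fun w ↦ h (w ^ 2) / 2) (f' := fun u ↦ u * f' u) (z₀ := 0) (z₁ := z)
    (by simpa using hcont) (fun t ht ↦ by simpa using hprim _ (hmem t ht))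
  simp only [zero_add, real_smul, smul_eq_mul] at hint
  rw [hint, zero_pow two_ne_zero]
  ring

theorem two_sub_ne_zero_of_re_lt_two {s : ℂ} (hs : s.re < 2) : 2 - s ≠ 0 := by
  intro h
  simp [← sub_eq_zero.1 h] at hs

theorem hasDerivAt_div_one_sub_sq_div_two {u : ℂ} (hu : 2 - u ^ 2 ≠ 0) :
    HasDerivAt (fun w : ℂ ↦ w / (1 - w ^ 2 / 2)) (2 * (2 + u ^ 2) / (2 - u ^ 2) ^ 2) u := by
  have hfac : 1 - u ^ 2 / 2 = (2 - u ^ 2) / 2 := by ring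
  have hden : HasDerivAt (fun w : ℂ ↦ 1 - w ^ 2 / 2) (-u) u :=
    (((hasDerivAt_pow 2 u).div_const 2).const_sub 1).congr_deriv (by simp)
  refine ((hasDerivAt_id u).div hden (by simp [hfac, hu])).congr_deriv ?_
  rw [hfac]
  simp only [id]
  field_simp
  ring

theorem re_two_mul_two_add_div_two_sub_sq_pos {s : ℂ} (hs : ‖s‖ < 1) :
    0 < (2 * (2 + s) / (2 - s) ^ 2).re := by
  have hre : s.re < 1 := (re_le_norm s).trans_lt hs
  have hsq : s.re ^ 2 + s.im ^ 2 < 1 := by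
    rw [← sq_norm_sub_sq_re, add_sub_cancel]
    exact pow_lt_one₀ (norm_nonneg s) hs two_ne_zero
  have hnum : (2 * (2 + s)).re * ((2 - s) ^ 2).re + (2 * (2 + s)).im * ((2 - s) ^ 2).im =
      2 * ((6 - s.re) * (1 - (s.re ^ 2 + s.im ^ 2)) + 4 * (s.re - 3 / 8) ^ 2 + 23 / 16) := by
    simp only [pow_two, mul_re, mul_im, add_re, add_im, sub_re, sub_im, re_ofNat, im_ofNat]
    ring
  have hmul : 0 < (6 - s.re) * (1 - (s.re ^ 2 + s.im ^ 2)) :=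
    mul_pos (by linarith) (by linarith)
  have hne : 2 - s ≠ 0 := two_sub_ne_zero_of_re_lt_two (by linarith)
  rw [div_re, ← add_div, hnum]
  exact div_pos (by positivity) (normSq_pos.2 (pow_ne_zero 2 hne))

/-- The function `h` with `h (z²) = 2 ∫₀^z u f'(u) du` for `f z = z / (1 - z²/2)`, that is, the
primitive of `2 (2 + s) / (2 - s)²` vanishing at `0`; it serves as the radicand of `F₂`. The
principal logarithm is analytic here as long as `Re s < 2`. -/
noncomputable def radicand (s : ℂ) : ℂ :=
  4 * s / (2 - s) + 2 * log (1 - s / 2)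

theorem radicand_zero : radicand 0 = 0 := by
  simp [radicand]

theorem hasDerivAt_radicand {s : ℂ} (hs : s.re < 2) :
    HasDerivAt radicand (2 * (2 + s) / (2 - s) ^ 2) s := by
  have hne : 2 - s ≠ 0 := two_sub_ne_zero_of_re_lt_two hs
  have hslit : 1 - s / 2 ∈ slitPlane := by
    have hre : (1 - s / 2).re = 1 - s.re / 2 := by simp
    exact .inl (hre ▸ by linarith)
  have hquot : HasDerivAt (fun w : ℂ ↦ 4 * w / (2 - w)) (8 / (2 - s) ^ 2) s :=
    (((hasDerivAt_id s).const_mul 4).div ((hasDerivAt_id s).const_sub 2) hne).congr_deriv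
      (by simp only [id]; ring)
  have hlog : HasDerivAt (fun w : ℂ ↦ log (1 - w / 2)) (-1 / (2 - s)) s := by
    refine ((((hasDerivAt_id s).div_const 2).const_sub 1).clog hslit).congr_deriv ?_
    rw [id, show 1 - s / 2 = (2 - s) / 2 by ring]
    field_simp
  refine (hquot.add (hlog.const_mul 2)).congr_deriv ?_
  field_simp
  ring

section UnitDisk

open Metric

theorem preimage_sq_ball_zero_one : (· ^ 2) ⁻¹' ball (0 : ℂ) 1 = ball 0 1 := by
  ext z
  simp

theorem re_lt_two_of_mem_ball {s : ℂ} (hs : s ∈ ball 0 1) : s.re < 2 :=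
  ((re_le_norm s).trans_lt (mem_ball_zero_iff.1 hs)).trans one_lt_two

theorem injOn_radicand : InjOn radicand (ball 0 1) :=
  injOn_of_re_deriv_pos (convex_ball 0 1)
    (fun _ hs ↦ (hasDerivAt_radicand (re_lt_two_of_mem_ball hs)).hasDerivWithinAt)
    (fun _ hs ↦ re_two_mul_two_add_div_two_sub_sq_pos (mem_ball_zero_iff.1 hs))

theorem differentiableOn_sqrtTransform_radicand :
    DifferentiableOn ℂ (sqrtTransform radicand) (ball 0 1) := by
  have hderiv : ∀ s ∈ ball (0 : ℂ) 1, HasDerivAt radicand (2 * (2 + s) / (2 - s) ^ 2) s :=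
    fun s hs ↦ hasDerivAt_radicand (re_lt_two_of_mem_ball hs)
  have hquot : ∀ s ∈ ball (0 : ℂ) 1, 0 < (dslope radicand 0 s).re := fun s hs ↦
    re_dslope_pos (convex_ball 0 1) hderiv
      (fun s hs ↦ re_two_mul_two_add_div_two_sub_sq_pos (mem_ball_zero_iff.1 hs))
      (mem_ball_self one_pos) hs
  rw [← preimage_sq_ball_zero_one]
  exact differentiableOn_sqrtTransform isOpen_ball (mem_ball_self one_pos)
    (fun s hs ↦ (hderiv s hs).differentiableAt.differentiableWithinAt)
    (fun s hs ↦ .inl (hquot s hs))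

theorem hasDerivAt_sqrtTransform_radicand_zero : HasDerivAt (sqrtTransform radicand) 1 0 := by
  have hrad : HasDerivAt radicand 1 0 :=
    (hasDerivAt_radicand (by simp)).congr_deriv (by norm_num)
  simpa [hrad.deriv] using
    hasDerivAt_sqrtTransform_zero hrad.differentiableAt (by simp [hrad.deriv])

theorem two_mul_integral_eq_radicand_sq {z : ℂ} (hz : z ∈ ball 0 1) :
    2 * (z * ∫ t in (0 : ℝ)..1,
      ((t : ℂ) * z) * deriv (fun w : ℂ ↦ w / (1 - w ^ 2 / 2)) ((t : ℂ) * z)) =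
      radicand (z ^ 2) := by
  have hre : ∀ u ∈ ball (0 : ℂ) 1, (u ^ 2).re < 2 := fun u hu ↦
    re_lt_two_of_mem_ball (preimage_sq_ball_zero_one.ge hu)
  have hf : ∀ u ∈ ball (0 : ℂ) 1, HasDerivAt (fun w : ℂ ↦ w / (1 - w ^ 2 / 2))
      (2 * (2 + u ^ 2) / (2 - u ^ 2) ^ 2) u := fun u hu ↦
    hasDerivAt_div_one_sub_sq_div_two (two_sub_ne_zero_of_re_lt_two (hre u hu))
  have hf' : ContinuousOn (deriv fun w : ℂ ↦ w / (1 - w ^ 2 / 2)) (ball 0 1) :=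
    (DifferentiableOn.deriv (fun u hu ↦ (hf u hu).differentiableAt.differentiableWithinAt)
      isOpen_ball).continuousOn
  have hrad : ∀ u ∈ ball (0 : ℂ) 1,
      HasDerivAt radicand (deriv (fun w : ℂ ↦ w / (1 - w ^ 2 / 2)) u) (u ^ 2) := fun u hu ↦ by
    rw [(hf u hu).deriv]
    exact hasDerivAt_radicand (hre u hu)
  have hstar : StarConvex ℝ 0 (ball (0 : ℂ) 1) :=
    (convex_ball 0 1).starConvex (mem_ball_self one_pos)
  rw [two_mul_integral_mul_eq_sub_of_hasDerivAt_sq hstar hf' hrad hz, radicand_zero, sub_zero]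

end UnitDisk

theorem stmt15 :
    ∃ F : ℂ → ℂ, AnalyticOnNhd ℂ F (Metric.ball 0 1) ∧
      Set.InjOn F (Metric.ball 0 1) ∧ F 0 = 0 ∧ deriv F 0 = 1 ∧
      ∀ z ∈ Metric.ball (0:ℂ) 1,
        F z ^ 2 = 2 * (z * ∫ t in (0:ℝ)..1,
          ((t : ℂ) * z) * deriv (fun w : ℂ => w / (1 - w ^ 2 / 2)) ((t : ℂ) * z)) := by
  refine ⟨sqrtTransform radicand, ?analytic, ?univalent, sqrtTransform_zero radicand,
    hasDerivAt_sqrtTransform_radicand_zero.deriv, ?square⟩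
  case analytic =>
    exact differentiableOn_sqrtTransform_radicand.analyticOnNhd Metric.isOpen_ball
  case univalent =>
    rw [← preimage_sq_ball_zero_one]
    exact injOn_sqrtTransform radicand_zero (Metric.mem_ball_self one_pos) injOn_radicand
  case square =>
    intro z hz
    rw [two_mul_integral_eq_radicand_sq hz, sqrtTransform_sq radicand_zero]
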